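/- arXiv:1410.4045 — 3 statements merged into one kernel-verified Lean document; each statement's English description precedes it below -/
import Mathlib

section
/- Let M be a geometric C-minimal structure, φ(u,v) an L-formula in two variables with parameters c̄ from M, and b ∈ M generic over c̄. Let D be a cone containing b and suppose that for every u ∈ D there is a subcone V_u of D containing u such that φ(u,v) holds in M for all v ∈ V_u. Then there exists a cone D' containing b such that φ(u,v) holds in M for all u,v ∈ D'. -/
open FirstOrder Set

universe u

namespace CMinPaper

variable {M : Type u}

/-- The axioms of a (dense) C-relation. -/
def IsCRelation (C : M → M → M → Prop) : Prop :=
  (∀ x y z, C x y z → C x z y) ∧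
  (∀ x y z, C x y z → ¬ C y x z) ∧
  (∀ x y z w, C x y z → C x w z ∨ C w y z) ∧
  (∀ x y, x ≠ y → ∃ z, z ≠ y ∧ C x y z)

/-- A cone (open ball). -/
def IsCone (C : M → M → M → Prop) (s : Set M) : Prop :=
  ∃ a b : M, a ≠ b ∧ s = {x | C a x b}

/-- A 0-level set (closed ball). -/
def IsClosedBall (C : M → M → M → Prop) (s : Set M) : Prop :=
  ∃ a b : M, s = {x | ¬ C x a b}

/-- A ball is a cone or a closed ball. -/
def IsBall (C : M → M → M → Prop) (s : Set M) : Prop :=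
  IsCone C s ∨ IsClosedBall C s

/-- The node `a ∧ b` of the underlying tree, viewed as the closed ball
`{z | ¬ C z a b}` of `M` it determines. -/
def node (C : M → M → M → Prop) (a b : M) : Set M := {x | ¬ C x a b}

/-- `Δ(x,y,z)`. -/
def Delta (C : M → M → M → Prop) (x y z : M) : Prop := ¬ C x y z ∧ ¬ C y x z

/-- The (unary) sets which are definable by a quantifier-free formula with
parameters using only `C` and equality.  A term is either the variable
(`Option.none`) or a parameter (`Option.some a`). -/
inductive QFDef (C : M → M → M → Prop) : Set M → Prop
  | atomC (t₁ t₂ t₃ : Option M) :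
      QFDef C {x | C (t₁.getD x) (t₂.getD x) (t₃.getD x)}
  | atomEq (t₁ t₂ : Option M) : QFDef C {x | t₁.getD x = t₂.getD x}
  | compl {s : Set M} : QFDef C s → QFDef C sᶜ
  | union {s t : Set M} : QFDef C s → QFDef C t → QFDef C (s ∪ t)

/-- The ternary relation interpreting the symbol `r`. -/
def interpC (L : FirstOrder.Language.{u, u}) (M : Type u) [L.Structure M]
    (r : L.Relations 3) : M → M → M → Prop :=
  fun a b c => Language.Structure.RelMap r ![a, b, c]

/-- `M` is C-minimal: in every elementarily equivalent structure, every
definable (with parameters) subset is quantifier-free definable using only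
`C` and `=`. -/
def CMinimal (L : FirstOrder.Language.{u, u}) (M : Type u) [L.Structure M]
    (r : L.Relations 3) : Prop :=
  ∀ (N : Type u) (SN : L.Structure N),
    letI := SN
    L.ElementarilyEquivalent M N →
      ∀ s : Set N, Set.Definable₁ (univ : Set N) L s → QFDef (interpC L N r) s

/-- The (model-theoretic) algebraic closure of a set of parameters. -/
def acl (L : FirstOrder.Language.{u, u}) (M : Type u) [L.Structure M] (A : Set M) : Set M :=
  {a | ∃ s : Set M, Set.Definable₁ A L s ∧ s.Finite ∧ a ∈ s}

/-- The Steinitz exchange property for the algebraic closure. -/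
def HasExchange (L : FirstOrder.Language.{u, u}) (M : Type u) [L.Structure M] : Prop :=
  ∀ (A : Set M) (a b : M),
    a ∈ acl L M (A ∪ {b}) → a ∉ acl L M A → b ∈ acl L M (A ∪ {a})

/-- `M` is geometric: acl has the exchange property in every elementarily
equivalent structure. -/
def Geometric (L : FirstOrder.Language.{u, u}) (M : Type u) [L.Structure M] : Prop :=
  ∀ (N : Type u) (SN : L.Structure N),
    letI := SN
    L.ElementarilyEquivalent M N → HasExchange L N

/-- `M` is trivial: in every elementarily equivalent structure the pregeometry
given by acl is trivial. -/
def TrivialGeometry (L : FirstOrder.Language.{u, u}) (M : Type u) [L.Structure M] : Prop :=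
  ∀ (N : Type u) (SN : L.Structure N),
    letI := SN
    L.ElementarilyEquivalent M N →
      ∀ A : Set N, acl L N A = ⋃ a ∈ A, acl L N {a}

/-- `M` is definably maximal: every definable family of cones which is linearly
ordered by inclusion has a non-empty intersection. -/
def DefinablyMaximal (L : FirstOrder.Language.{u, u}) (M : Type u) [L.Structure M]
    (r : L.Relations 3) : Prop :=
  ∀ (n : ℕ) (S : Set (Fin (n + 1) → M)) (P : Set (Fin n → M)),
    Set.Definable (univ : Set M) L S →
    (∀ p ∈ P, IsCone (interpC L M r) {x | Fin.snoc p x ∈ S}) →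
    (∀ p ∈ P, ∀ q ∈ P,
      {x | Fin.snoc p x ∈ S} ⊆ {x | Fin.snoc q x ∈ S} ∨
        {x | Fin.snoc q x ∈ S} ⊆ {x | Fin.snoc p x ∈ S}) →
    P.Nonempty → (⋂ p ∈ P, {x | Fin.snoc p x ∈ S}).Nonempty

/-- Leaves of the underlying tree are the singletons. -/
def IsLeafSet (s : Set M) : Prop := ∃ x : M, s = {x}

/-- The interval `(lo, hi)` of the branch `br c`, consisting of all nodes
(coded as the closed balls they determine) strictly between the endpoints.
`lo = none` denotes `-∞`; `lo = some p` denotes the node `c ∧ p`; `hi : M`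
denotes the node `c ∧ hi` (the leaf `c` when `hi = c`).  The tree ordering is
reverse inclusion of balls. -/
def branchInterval (C : M → M → M → Prop) (c : M) (lo : Option M) (hi : M) :
    Set (Set M) :=
  {B | (∃ s, B = node C c s) ∧ ¬ IsLeafSet B ∧
    (∀ p ∈ lo, B ⊂ node C c p) ∧ node C c hi ⊂ B}

/-- `I` is an interval of the branch `br c`. -/
def IsIntervalOn (C : M → M → M → Prop) (c : M) (I : Set (Set M)) : Prop :=
  ∃ (lo : Option M) (hi : M), I = branchInterval C c lo hi

/-- `I` is a bounded interval of `br c` (bounded from below and from above). -/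
def IsBoundedInterval (C : M → M → M → Prop) (c : M) (I : Set (Set M)) : Prop :=
  ∃ p hi : M, I = branchInterval C c (some p) hi ∧ ¬ IsLeafSet (node C c hi)

/-- `I` is an unbounded (i.e. not bounded) interval of `br c`. -/
def IsUnboundedInterval (C : M → M → M → Prop) (c : M) (I : Set (Set M)) :
    Prop :=
  IsIntervalOn C c I ∧ ¬ IsBoundedInterval C c I

/-- The relation on nodes coded by `S ⊆ M²` via `(s,t) ↦ (c ∧ s, d ∧ t)`. -/
def codedRel (C : M → M → M → Prop) (S : Set (Fin 2 → M)) (c d : M)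
    (B B' : Set M) : Prop :=
  ∃ s t : M, ![s, t] ∈ S ∧ B = node C c s ∧ B' = node C d t

/-- `S ⊆ M²` codes a bijection between the set `I` of nodes of `br c` and the
set `J` of nodes of `br d`. -/
def CodesBijectionBetween (C : M → M → M → Prop) (S : Set (Fin 2 → M))
    (c d : M) (I J : Set (Set M)) : Prop :=
  (∀ B B', codedRel C S c d B B' → B ∈ I ∧ B' ∈ J) ∧
  (∀ B ∈ I, ∃! B', B' ∈ J ∧ codedRel C S c d B B') ∧
  (∀ B' ∈ J, ∃! B, B ∈ I ∧ codedRel C S c d B B')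

/-- Condition (NB): there is no definable bijection between a bounded interval
and an unbounded interval of branches of the underlying tree. -/
def NB (L : FirstOrder.Language.{u, u}) (M : Type u) [L.Structure M] (r : L.Relations 3) :
    Prop :=
  ∀ (c d : M) (S : Set (Fin 2 → M)), Set.Definable (univ : Set M) L S →
    ∀ I J : Set (Set M),
      IsBoundedInterval (interpC L M r) c I →
      IsUnboundedInterval (interpC L M r) d J →
      ¬ CodesBijectionBetween (interpC L M r) S c d I J

/-- An infinite group definable in `M`: an infinite definable `G ⊆ Mⁿ`
together with a definable subset of `M^{3n}` which is the graph of a group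
operation on `G`. -/
def DefinableInfiniteGroup (L : FirstOrder.Language.{u, u}) (M : Type u)
    [L.Structure M] : Prop :=
  ∃ (n : ℕ) (G : Set (Fin n → M)) (mul : (Fin n → M) → (Fin n → M) → Fin n → M)
    (one : Fin n → M) (inv : (Fin n → M) → Fin n → M),
    Set.Definable (univ : Set M) L G ∧ G.Infinite ∧
    Set.Definable (univ : Set M) L
      {t : (Fin n ⊕ (Fin n ⊕ Fin n)) → M |
        t ∘ Sum.inl ∈ G ∧ t ∘ Sum.inr ∘ Sum.inl ∈ G ∧
          mul (t ∘ Sum.inl) (t ∘ Sum.inr ∘ Sum.inl) = t ∘ Sum.inr ∘ Sum.inr} ∧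
    one ∈ G ∧ (∀ a ∈ G, ∀ b ∈ G, mul a b ∈ G) ∧
    (∀ a ∈ G, ∀ b ∈ G, ∀ c ∈ G, mul (mul a b) c = mul a (mul b c)) ∧
    (∀ a ∈ G, mul one a = a ∧ mul a one = a) ∧
    (∀ a ∈ G, inv a ∈ G ∧ mul a (inv a) = one ∧ mul (inv a) a = one)

/-- `g` is a C-isomorphism from `A` onto `B`. -/
def CIsoOn (C : M → M → M → Prop) (A B : Set M) (g : M → M) : Prop :=
  Set.BijOn g A B ∧ ∀ x ∈ A, ∀ y ∈ A, ∀ z ∈ A, (C x y z ↔ C (g x) (g y) (g z))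

/-- The relation `C_e(f,g,h)`. -/
def CeRel (C : M → M → M → Prop) (V : Set M) (e : M) (f g h : M → M) : Prop :=
  ∃ W : Set M, IsCone C W ∧ e ∈ W ∧ W ⊆ V ∧ ∀ x ∈ W \ {e}, C (f x) (g x) (h x)

/-- The relation `(¬C)_e(f,g,h)`. -/
def NCeRel (C : M → M → M → Prop) (V : Set M) (e : M) (f g h : M → M) : Prop :=
  ∃ W : Set M, IsCone C W ∧ e ∈ W ∧ W ⊆ V ∧ ∀ x ∈ W \ {e}, ¬ C (f x) (g x) (h x)

/-- A function is definable on `V` if its graph over `V` is definable. -/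
def DefinableFunOn (L : FirstOrder.Language.{u, u}) (M : Type u) [L.Structure M]
    (V : Set M) (g : M → M) : Prop :=
  Set.Definable (univ : Set M) L {t : Fin 2 → M | t 0 ∈ V ∧ g (t 0) = t 1}

/-- A nice family of functions `{f u : u ∈ U}` on the cone `V`, with absorbing
element `e`. -/
structure NiceFamily (L : FirstOrder.Language.{u, u}) (M : Type u) [L.Structure M]
    (C : M → M → M → Prop) where
  U : Set M
  V : Set M
  e : M
  f : M → M → M
  coneU : IsCone C U
  coneV : IsCone C V
  he : e ∈ V
  definable : Set.Definable (univ : Set M) L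
    {t : Fin 3 → M | t 0 ∈ U ∧ t 1 ∈ V ∧ f (t 0) (t 1) = t 2}
  auto : ∀ u ∈ U, CIsoOn C V V (f u)
  fixe : ∀ u ∈ U, f u e = e
  star : ∀ x ∈ V \ {e}, ∃ V' : Set M, V' ⊆ V ∧ IsCone C V' ∧
    CIsoOn C U V' fun u => f u x

namespace NiceFamily

variable {L : FirstOrder.Language.{u, u}} [L.Structure M] {C : M → M → M → Prop}

/-- `f u` is tangent to `g` relatively to the family. -/
def Tangent (F : NiceFamily L M C) (u : M) (g : M → M) : Prop :=
  u ∈ F.U ∧ ∀ u' ∈ F.U, NCeRel C F.V F.e (F.f u) (F.f u') g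

/-- The set `T_g` of indices of tangents to `g`. -/
def Tset (F : NiceFamily L M C) (g : M → M) : Set M := {u | F.Tangent u g}

/-- The set `Γ_{g,u}`. -/
def Gamma (F : NiceFamily L M C) (g : M → M) (u : M) : Set M :=
  {y | y ∈ F.U ∧ CeRel C F.V F.e (F.f u) (F.f y) g}

/-- `g` is derivable relatively to the family: it has exactly one tangent. -/
def Derivable (F : NiceFamily L M C) (g : M → M) : Prop := ∃! u, F.Tangent u g

/-- `f u` is non-dilating. -/
def NonDilating (F : NiceFamily L M C) (u : M) : Prop :=
  NCeRel C F.V F.e (fun x => F.f u (F.f u x)) (F.f u) id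

/-- `u₀` is an identity element for the family. -/
def HasIdentity (F : NiceFamily L M C) (u₀ : M) : Prop :=
  u₀ ∈ F.U ∧ ∀ x ∈ F.V, F.f u₀ x = x

end NiceFamily

/-- Continuity on `A` with respect to the topology generated by the cones. -/
def ContinuousOnCones (C : M → M → M → Prop) (A : Set M) (g : M → M) : Prop :=
  ∀ x ∈ A, ∀ W : Set M, IsCone C W → g x ∈ W →
    ∃ W' : Set M, IsCone C W' ∧ x ∈ W' ∧ ∀ y ∈ W' ∩ A, g y ∈ W

section CRelation

variable {C : M → M → M → Prop}

/-- A smaller cone at `u` inside two given cones at `u`. -/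
theorem IsCRelation.exists_cone_subset_inter (hC : IsCRelation C) {u s t : M}
    (hs : s ≠ u) (ht : t ≠ u) : ∃ p, p ≠ u ∧ ∀ x, C p x u → C s x u ∧ C t x u := by
  obtain ⟨h1, h2, h3, h4⟩ := hC
  by_cases hst : C s t u
  · exact ⟨t, ht, fun x hx => ⟨by grind, hx⟩⟩
  · by_cases hts : C t s u
    · exact ⟨s, hs, fun x hx => ⟨hx, by grind⟩⟩
    · exact ⟨s, hs, fun x hx => ⟨hx, by grind⟩⟩

/-- Cones are infinite. -/
theorem IsCRelation.infinite_cone (hC : IsCRelation C) {p b : M} (hp : p ≠ b) :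
    {x | C p x b}.Infinite := by
  intro hfin
  obtain ⟨h1, h2, h3, h4⟩ := hC
  induction hn : {x | C p x b}.ncard using Nat.strong_induction_on generalizing p with
  | _ n ih =>
    obtain ⟨z, hz, hpz⟩ := h4 p b hp
    have hss : {x | C z x b} ⊂ {x | C p x b} := by
      refine (Set.ssubset_iff_of_subset fun x hx => ?_).2 ⟨z, h1 _ _ _ hpz, fun h => ?_⟩
      · simp only [Set.mem_ofPred_eq] at hx ⊢
        grind
      · exact h2 _ _ _ h h
    exact ih _ (hn ▸ Set.ncard_lt_ncard hss hfin) hz (hfin.subset hss.subset) rfl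

/-- The points at which the membership in `P` is not locally constant. -/
def boundaryPoints (C : M → M → M → Prop) (P : Set M) : Set M :=
  {u | ∀ s, s ≠ u → ∃ x, C s x u ∧ ¬ (x ∈ P ↔ u ∈ P)}

/-- Membership in a quantifier-free definable set is locally constant outside a finite set. -/
theorem IsCRelation.finite_boundaryPoints [Nonempty M] (hC : IsCRelation C) {P : Set M}
    (hP : QFDef C P) : (boundaryPoints C P).Finite := by
  have inf := fun {u s t : M} => hC.exists_cone_subset_inter (u := u) (s := s) (t := t)
  have key : ∀ {P : Set M} (a c : M),
      (∀ u x, C a x u → C c x u → (x ∈ P ↔ u ∈ P)) → (boundaryPoints C P).Finite := by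
    intro P a c h
    refine (Set.toFinite {a, c}).subset fun u hu => ?_
    by_contra hne
    simp only [Set.mem_insert_iff, Set.mem_singleton_iff, not_or] at hne
    obtain ⟨p, hp, hpx⟩ := inf (Ne.symm hne.1) (Ne.symm hne.2)
    obtain ⟨x, hx, hn⟩ := hu p hp
    exact hn (h u x (hpx x hx).1 (hpx x hx).2)
  induction hP with
  | atomC t₁ t₂ t₃ =>
    obtain ⟨h1, h2, h3, h4⟩ := hC
    inhabit M
    rcases t₁ with _ | t₁
    · refine key (t₂.getD default) (t₃.getD default) fun u x _ _ => ?_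
      rcases t₂ with _ | t₂ <;> rcases t₃ with _ | t₃ <;>
        simp only [Option.getD, Set.mem_ofPred_eq] at * <;> grind
    · refine key t₁ (t₂.getD (t₃.getD t₁)) fun u x _ _ => ?_
      rcases t₂ with _ | t₂ <;> rcases t₃ with _ | t₃ <;>
        simp only [Option.getD, Set.mem_ofPred_eq] at * <;> grind
  | atomEq t₁ t₂ =>
    obtain ⟨h1, h2, h3, h4⟩ := hC
    inhabit M
    refine key (t₁.getD default) (t₂.getD default) fun u x hx hx' => ?_
    rcases t₁ with _ | t₁ <;> rcases t₂ with _ | t₂ <;>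
      simp only [Option.getD, Set.mem_ofPred_eq] at * <;> grind
  | compl _ ih =>
    refine ih.subset fun u hu s hs => ?_
    obtain ⟨x, hx, hn⟩ := hu s hs
    exact ⟨x, hx, fun h => hn (not_congr h)⟩
  | union _ _ ih ih' =>
    refine (ih.union ih').subset fun u hu => ?_
    by_contra hne
    simp only [Set.mem_union, not_or, boundaryPoints, Set.mem_ofPred_eq, not_forall,
      not_exists, not_and, not_not] at hne
    obtain ⟨⟨s, hs, h⟩, t, ht, h'⟩ := hne
    obtain ⟨p, hp, hpx⟩ := inf hs ht
    obtain ⟨x, hx, hn⟩ := hu p hp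
    exact hn (or_congr (h x (hpx x hx).1) (h' x (hpx x hx).2))

end CRelation

section Definability

variable {L : FirstOrder.Language.{u, u}} [L.Structure M] {B : Set M}

theorem definable_exists_three {R : M → M → M → Prop}
    (hR : B.Definable L {w : Fin 3 → M | R (w 0) (w 1) (w 2)}) :
    B.Definable L {w : Fin 2 → M | ∃ x, R (w 0) (w 1) x} := by
  convert! hR.image_comp_embedding (Fin.castSuccEmb (n := 2)) using 1
  ext v
  constructor
  · rintro ⟨x, hx⟩
    refine ⟨![v 0, v 1, x], hx, ?_⟩
    ext i
    fin_cases i <;> rfl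
  · rintro ⟨w, hw, rfl⟩
    exact ⟨w 2, hw⟩

theorem definable_exists_two {R : M → M → Prop}
    (hR : B.Definable L {w : Fin 2 → M | R (w 0) (w 1)}) :
    B.Definable₁ L {u | ∃ x, R u x} := by
  unfold Set.Definable₁
  convert! hR.image_comp_embedding (Fin.castSuccEmb (n := 1)) using 1
  ext v
  constructor
  · rintro ⟨x, hx⟩
    refine ⟨![v 0, x], hx, ?_⟩
    ext i
    fin_cases i
    rfl
  · rintro ⟨w, hw, rfl⟩
    exact ⟨w 1, hw⟩

theorem definable_interpC (r : L.Relations 3) {n : ℕ} (i j k : Fin n) :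
    B.Definable L {w : Fin n → M | interpC L M r (w i) (w j) (w k)} := by
  refine Set.Definable.mono (A := ∅) ?_ (Set.empty_subset _)
  refine Set.empty_definable_iff.2
    ⟨r.formula ![Language.Term.var i, Language.Term.var j, Language.Term.var k], ?_⟩
  ext w
  simp only [Set.mem_ofPred_eq, interpC, Language.Formula.realize_rel]
  refine iff_of_eq (congrArg _ (funext fun l => ?_))
  fin_cases l <;> rfl

theorem definable_boundaryPoints (r : L.Relations 3) {P : Set M} (hP : B.Definable₁ L P) :
    B.Definable₁ L (boundaryPoints (interpC L M r) P) := by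
  have hP' : ∀ {n : ℕ} (i : Fin n), B.Definable L {w : Fin n → M | w i ∈ P} :=
    fun i => hP.preimage_comp (fun _ => i)
  have heq : B.Definable L {w : Fin 2 → M | w 1 = w 0} :=
    (Set.Definable.diagonal L B).preimage_comp (![1, 0] : Fin 2 → Fin 2)
  have h3 : B.Definable L {w : Fin 3 → M |
      interpC L M r (w 1) (w 2) (w 0) ∧ ¬ (w 2 ∈ P ↔ w 0 ∈ P)} := by
    convert! (definable_interpC (B := B) r 1 2 0).inter
      (((hP' 2).sdiff (hP' 0)).union ((hP' 0).sdiff (hP' 2))) using 1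
    ext w
    simp only [Set.mem_ofPred_eq, Set.mem_inter_iff, Set.mem_union, Set.mem_sdiff]
    tauto
  have h2 := (definable_exists_three (R := fun u s x =>
    interpC L M r s x u ∧ ¬ (x ∈ P ↔ u ∈ P)) h3).union heq
  have h1 := definable_exists_two (R := fun u s => ¬ ((∃ x,
    interpC L M r s x u ∧ ¬ (x ∈ P ↔ u ∈ P)) ∨ s = u)) h2.compl
  unfold Set.Definable₁
  convert! Set.Definable.compl h1 using 1
  ext w
  simp only [boundaryPoints, Set.mem_ofPred_eq, Set.mem_compl_iff, not_exists, not_not]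
  exact forall_congr' fun s => or_comm.trans or_iff_not_imp_left |>.symm

theorem definable_ball_subset_fiber (r : L.Relations 3) {Ψ : Set (Fin 2 → M)}
    (hΨ : B.Definable L Ψ) {y : M} (hy : y ∈ B) :
    B.Definable₁ L {u | ∀ x, ¬ interpC L M r x u y → ![u, x] ∈ Ψ} := by
  have hΨ' : B.Definable L {w : Fin 3 → M | ![w 0, w 2] ∈ Ψ} := by
    convert! hΨ.preimage_comp (![0, 2] : Fin 2 → Fin 3) using 1
    ext w
    refine iff_of_eq (congrArg (· ∈ Ψ) (funext fun l => ?_))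
    fin_cases l <;> rfl
  have h2 := definable_exists_three (R := fun u y x =>
    ¬ (interpC L M r x u y ∨ ![u, x] ∈ Ψ)) ((definable_interpC r 2 0 1).union hΨ').compl
  have h1 := definable_exists_two (R := fun u y' =>
    ¬ (∃ x, ¬ (interpC L M r x u y' ∨ ![u, x] ∈ Ψ)) ∧ y' = y)
    (h2.compl.inter ((Set.Definable.singleton_of_mem L hy).preimage_comp fun _ => 1))
  convert! h1 using 1
  ext w
  simp only [Set.mem_ofPred_eq, not_exists, not_not, exists_eq_right]
  exact forall_congr' fun s => by tauto

/-- A non-algebraic point of a definable set in a C-minimal structure is an interior point. -/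
theorem exists_cone_of_notMem_acl (r : L.Relations 3) (hC : IsCRelation (interpC L M r))
    (hmin : CMinimal L M r) {P : Set M} (hP : B.Definable₁ L P) {b : M} (hbP : b ∈ P)
    (hb : b ∉ acl L M B) : ∃ s, s ≠ b ∧ ∀ x, interpC L M r s x b → x ∈ P := by
  by_contra! hcon
  have : Nonempty M := ⟨b⟩
  refine hb ⟨_, definable_boundaryPoints r hP, hC.finite_boundaryPoints
    (hmin M inferInstance rfl P (Set.Definable.mono hP (Set.subset_univ _))), fun s hs => ?_⟩
  obtain ⟨x, hx, hxP⟩ := hcon s hs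
  exact ⟨x, hx, fun h => hxP (h.2 hbP)⟩

end Definability

section Ultrapower

variable {L : FirstOrder.Language.{u, u}} [L.Structure M] {I : Type u} (U : Ultrafilter I)

/-- The ultrapower of `M` along `U`. -/
abbrev Ultrapower (M : Type u) (U : Ultrafilter I) : Type u := (U : Filter I).Product fun _ => M

/-- The class of a family in the ultrapower. -/
def Ultrapower.mk (x : I → M) : Ultrapower M U := Quotient.mk _ x

/-- The diagonal embedding in the ultrapower. -/
def Ultrapower.diag (m : M) : Ultrapower M U := Ultrapower.mk U fun _ => m

namespace Ultrapower

variable {U}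

theorem exists_mk (x : Ultrapower M U) : ∃ f : I → M, mk U f = x := Quotient.exists_rep x

theorem mk_eq_mk {f g : I → M} : mk U f = mk U g ↔ ∀ᶠ i in U, f i = g i := Quotient.eq

theorem diag_injective : Function.Injective (diag (M := M) U) := fun x y h => by
  simpa using mk_eq_mk.1 h

theorem elementarilyEquivalent [Nonempty M] : L.ElementarilyEquivalent M (Ultrapower M U) :=
  Language.elementarilyEquivalent_iff.2 fun φ => by
    rw [Language.Ultraproduct.sentence_realize, Filter.eventually_const]

theorem interpC_mk (r : L.Relations 3) (x y z : I → M) :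
    interpC L (Ultrapower M U) r (mk U x) (mk U y) (mk U z) ↔
      ∀ᶠ i in U, interpC L M r (x i) (y i) (z i) := by
  have h : ∀ {N : Type u} [L.Structure N] (v : Fin 3 → N), interpC L N r (v 0) (v 1) (v 2) ↔
      (r.formula fun i : Fin 3 => Language.Term.var i).Realize v := by
    intro N _ v
    rw [Language.Formula.realize_rel]
    refine iff_of_eq (congrArg _ (funext fun l => ?_))
    fin_cases l <;> rfl
  obtain ⟨i⟩ := U.neBot.nonempty
  have : Nonempty M := ⟨x i⟩
  refine (h fun j => mk U (![x, y, z] j)).trans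
    ((Language.Ultraproduct.realize_formula_cast _ ![x, y, z]).trans ?_)
  exact Filter.eventually_congr (.of_forall fun i => (h fun j => ![x, y, z] j i).symm)

theorem isCRelation {r : L.Relations 3} (hC : IsCRelation (interpC L M r)) :
    IsCRelation (interpC L (Ultrapower M U) r) := by
  obtain ⟨h1, h2, h3, h4⟩ := hC
  refine ⟨fun x y z => ?_, fun x y z => ?_, fun x y z w => ?_, fun x y => ?_⟩ <;>
    obtain ⟨x, rfl⟩ := exists_mk x <;> obtain ⟨y, rfl⟩ := exists_mk y
  · obtain ⟨z, rfl⟩ := exists_mk z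
    simp only [interpC_mk]
    exact fun h => h.mono fun i => h1 _ _ _
  · obtain ⟨z, rfl⟩ := exists_mk z
    simp only [interpC_mk, ← Ultrafilter.eventually_not]
    exact fun h => h.mono fun i => h2 _ _ _
  · obtain ⟨z, rfl⟩ := exists_mk z
    obtain ⟨w, rfl⟩ := exists_mk w
    simp only [interpC_mk, ← Ultrafilter.eventually_or]
    exact fun h => h.mono fun i => h3 _ _ _ _
  · rw [Ne, mk_eq_mk, ← Ultrafilter.eventually_not]
    intro h
    have h4' : ∀ i, ∃ z, x i ≠ y i → z ≠ y i ∧ interpC L M r (x i) (y i) z := fun i => by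
      by_cases hi : x i = y i
      · exact ⟨x i, fun h => (h hi).elim⟩
      · exact (h4 _ _ hi).imp fun z hz _ => hz
    choose z hz using h4'
    refine ⟨mk U z, ?_, (interpC_mk ..).2 (h.mono fun i hi => (hz i hi).2)⟩
    rw [Ne, mk_eq_mk, ← Ultrafilter.eventually_not]
    exact h.mono fun i hi => (hz i hi).1

theorem realize_diag [Nonempty M] {A : Set M} {α : Type} (φ : L.Formula (A ⊕ α))
    (x : α → I → M) :
    φ.Realize (Sum.elim (fun a : A => diag U (a : M)) fun j => mk U (x j)) ↔
      ∀ᶠ i in U, φ.Realize (Sum.elim (fun a : A => (a : M)) fun j => x j i) := by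
  convert! Language.Ultraproduct.realize_formula_cast (u := U) φ
    (Sum.elim (fun (a : A) (_ : I) => (a : M)) x) using 2
  · ext (a | j) <;> rfl
  · congr! 2 with i
    ext (a | j) <;> rfl

/-- The interpretation in the ultrapower of a definable set. -/
theorem exists_definable_extension [Nonempty M] {A : Set M} {α : Type} {S : Set (α → M)}
    (hS : A.Definable L S) : ∃ T : Set (α → Ultrapower M U),
      (diag U '' A).Definable L T ∧
        ∀ x : α → I → M, (fun j => mk U (x j)) ∈ T ↔ ∀ᶠ i in U, (fun j => x j i) ∈ S := by
  obtain ⟨φ, rfl⟩ := Set.definable_iff_exists_formula_sum.1 hS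
  refine ⟨{v | φ.Realize (Sum.elim (fun a : A => diag U (a : M)) v)},
    Set.definable_iff_exists_formula_sum.2
      ⟨φ.relabel (Sum.map (fun a : A => ⟨diag U a, a, a.2, rfl⟩) id), ?_⟩,
    fun x => realize_diag φ x⟩
  ext v
  simp only [Set.mem_ofPred_eq, Language.Formula.realize_relabel]
  refine iff_of_eq (congrArg _ ?_)
  ext (a | j) <;> rfl

/-- A set definable in the ultrapower over standard parameters is the interpretation of a
definable set. -/
theorem exists_definable_restriction [Nonempty M] {A : Set M} {α : Type}
    {T : Set (α → Ultrapower M U)} (hT : (diag U '' A).Definable L T) :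
    ∃ S : Set (α → M), A.Definable L S ∧
      ∀ x : α → I → M, (fun j => mk U (x j)) ∈ T ↔ ∀ᶠ i in U, (fun j => x j i) ∈ S := by
  obtain ⟨φ, rfl⟩ := Set.definable_iff_exists_formula_sum.1 hT
  have hg : ∀ a : diag U '' A, ∃ m : A, diag U (m : M) = a := fun ⟨_, m, hm, h⟩ => ⟨⟨m, hm⟩, h⟩
  choose g hg using hg
  refine ⟨_, Set.definable_iff_exists_formula_sum.2 ⟨φ.relabel (Sum.map g id), rfl⟩, fun x => ?_⟩
  refine Iff.trans ?_ (realize_diag _ x)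
  simp only [Set.mem_ofPred_eq, Language.Formula.realize_relabel]
  refine iff_of_eq (congrArg _ ?_)
  ext (a | j)
  · exact (hg a).symm
  · rfl

/-- An element algebraic over standard parameters lies, up to `U`, in a finite definable set. -/
theorem exists_finite_of_mem_acl [Nonempty M] {A : Set M} {y : I → M}
    (hy : mk U y ∈ acl L (Ultrapower M U) (diag U '' A)) :
    ∃ S : Set M, A.Definable₁ L S ∧ S.Finite ∧ ∀ᶠ i in U, y i ∈ S := by
  obtain ⟨T, hT, hfin, hyT⟩ := hy
  obtain ⟨S, hS, hST⟩ := exists_definable_restriction hT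
  have hconst : ∀ x : Fin 1 → M, (fun _ => x 0) = x := fun x => by
    ext j
    rw [Subsingleton.elim j 0]
  refine ⟨{m | (fun _ => m) ∈ S}, ?_, ?_, (hST fun _ => y).1 hyT⟩
  · unfold Set.Definable₁
    simpa only [Set.mem_ofPred_eq, hconst, Set.ofPred_mem_eq] using hS
  · refine (hfin.preimage diag_injective.injOn).subset fun m hm => ?_
    exact (hST fun _ _ => m).2 (Filter.Eventually.of_forall fun _ => hm)

end Ultrapower

end Ultrapower

theorem statement4 {L : FirstOrder.Language.{u, u}} {M : Type u} [L.Structure M]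
    (r : L.Relations 3)
    (hC : IsCRelation (interpC L M r))
    (hmin : CMinimal L M r)
    (hgeom : Geometric L M)
    (A : Set M) (hA : A.Finite)
    (Φ : Set (Fin 2 → M)) (hΦ : Set.Definable A L Φ)
    (b : M) (hb : b ∉ acl L M A)
    (D : Set M) (hD : IsCone (interpC L M r) D) (hbD : b ∈ D)
    (h : ∀ u ∈ D, ∃ Vu : Set M, IsCone (interpC L M r) Vu ∧ Vu ⊆ D ∧ u ∈ Vu ∧
      ∀ v ∈ Vu, ![u, v] ∈ Φ) :
    ∃ D' : Set M, IsCone (interpC L M r) D' ∧ b ∈ D' ∧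
      ∀ u ∈ D', ∀ v ∈ D', ![u, v] ∈ Φ := by
  obtain ⟨V, ⟨p, q, hpq, rfl⟩, -, hbV, hV⟩ := h b hbD
  have : Nonempty M := ⟨b⟩
  have hC' := hC
  obtain ⟨h1, h2, h3, h4⟩ := hC'
  simp only [Set.mem_ofPred_eq] at hbV hV
  have hpb : p ≠ b := by
    rintro rfl
    exact h2 _ _ _ hbV hbV
  let I : Type u := {x | interpC L M r p x b}
  have : Infinite I := (hC.infinite_cone hpb).to_subtype
  let U : Ultrafilter I := Filter.hyperfilter I
  let b' := Ultrapower.diag U b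
  let y := Ultrapower.mk U fun i : I => (i : M)
  have hfinite : ∀ S : Set M, S.Finite → ¬ ∀ᶠ i : I in U, (i : M) ∈ S := fun S hS =>
    Filter.notMem_hyperfilter_of_finite (hS.preimage Subtype.val_injective.injOn)
  have hyb : y ≠ b' := fun hyb =>
    hfinite {b} (Set.finite_singleton b) (Ultrapower.mk_eq_mk.1 hyb)
  have hyacl : y ∉ acl L (Ultrapower M U) (Ultrapower.diag U '' A ∪ {b'}) := by
    intro hy
    rw [← Set.image_singleton, ← Set.image_union] at hy
    obtain ⟨S, -, hS, hyS⟩ := Ultrapower.exists_finite_of_mem_acl hy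
    exact hfinite S hS hyS
  have hbacl : b' ∉ acl L (Ultrapower M U) (Ultrapower.diag U '' A) := by
    intro hb'
    obtain ⟨S, hS, hfin, hbS⟩ := Ultrapower.exists_finite_of_mem_acl hb'
    exact hb ⟨S, hS, hfin, Filter.eventually_const.1 hbS⟩
  have hequiv : L.ElementarilyEquivalent M (Ultrapower M U) := Ultrapower.elementarilyEquivalent
  have hby : b' ∉ acl L (Ultrapower M U) (Ultrapower.diag U '' A ∪ {y}) := fun hb' =>
    hyacl (hgeom _ _ hequiv _ _ _ hb' hbacl)
  have hCN : IsCRelation (interpC L (Ultrapower M U) r) := Ultrapower.isCRelation hC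
  have hminN : CMinimal L (Ultrapower M U) r := fun N SN hN => hmin N SN (hequiv.trans hN)
  obtain ⟨Ψ, hΨ, hΨΦ⟩ := Ultrapower.exists_definable_extension (U := U) hΦ
  have hΨ2 : ∀ u v : I → M, ![Ultrapower.mk U u, Ultrapower.mk U v] ∈ Ψ ↔
      ∀ᶠ i in U, ![u i, v i] ∈ Φ := fun u v => by
    convert! hΨΦ ![u, v] using 2
    · ext j
      fin_cases j <;> rfl
    · congr! 2 with i
      ext j
      fin_cases j <;> rfl
  obtain ⟨s, hsb, hs⟩ := exists_cone_of_notMem_acl r hCN hminN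
    (definable_ball_subset_fiber r (hΨ.mono Set.subset_union_left)
      (Set.mem_union_right _ (Set.mem_singleton y))) (b := b') (by
      intro x hx
      obtain ⟨x, rfl⟩ := Ultrapower.exists_mk x
      refine (hΨ2 _ _).2 ?_
      have hx' := Ultrafilter.eventually_not.2 (mt (Ultrapower.interpC_mk r _ _ _).2 hx)
      refine hx'.mono fun i hi => hV _ ?_
      have hi' : interpC L M r p i b := i.2
      grind) hby
  obtain ⟨t, htb, ht⟩ := hCN.exists_cone_subset_inter hsb hyb
  have htΨ : ∀ u v, interpC L (Ultrapower M U) r t u b' →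
      interpC L (Ultrapower M U) r t v b' → ![u, v] ∈ Ψ := by
    intro u v hu hv
    refine hs u (ht u hu).1 v fun hvu => ?_
    have hyu := (ht u hu).2
    have hyv := (ht v hv).2
    obtain ⟨k1, k2, k3, -⟩ := hCN
    grind
  by_contra! hcon
  have hcon' : ∀ m, ∃ u v, m ≠ b → interpC L M r m u b ∧ interpC L M r m v b ∧
      ![u, v] ∉ Φ := fun m => by
    by_cases hm : m = b
    · exact ⟨b, b, fun h => (h hm).elim⟩
    · have hmb : interpC L M r m b b := by
        obtain ⟨z, -, hz⟩ := h4 m b hm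
        grind
      obtain ⟨u, hu, v, hv, huv⟩ := hcon _ ⟨m, b, hm, rfl⟩ hmb
      exact ⟨u, v, fun _ => ⟨hu, hv, huv⟩⟩
  choose f g hfg using hcon'
  obtain ⟨t, rfl⟩ := Ultrapower.exists_mk t
  have htb' : ∀ᶠ i in U, t i ≠ b := by
    rw [Ultrafilter.eventually_not]
    exact fun h => htb (Ultrapower.mk_eq_mk.2 h)
  have hΨfg := htΨ (Ultrapower.mk U fun i => f (t i)) (Ultrapower.mk U fun i => g (t i))
    ((Ultrapower.interpC_mk ..).2 (htb'.mono fun i hi => (hfg _ hi).1))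
    ((Ultrapower.interpC_mk ..).2 (htb'.mono fun i hi => (hfg _ hi).2.1))
  obtain ⟨i, hi, hi'⟩ := (((hΨ2 _ _).1 hΨfg).and htb').exists
  exact (hfg _ hi').2.2 hi

end CMinPaper
end

section
/- Let M be a C-minimal structure, V ⊆ M a cone, e an element of V, and f,g,h : V → M definable functions. Then there is a cone W with e ∈ W ⊆ V such that either C(f(x),g(x),h(x)) holds for every x ∈ W∖{e}, or ¬C(f(x),g(x),h(x)) holds for every x ∈ W∖{e}. -/
open FirstOrder Set

universe u

namespace CMinPaper

variable {M : Type u}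

namespace IsCRelation

variable {C : M → M → M → Prop}

lemma of_ne (hC : IsCRelation C) {x y : M} (hxy : x ≠ y) : C x y y := by
  obtain ⟨h1, h2, h3, h4⟩ := hC
  obtain ⟨z, -, hz⟩ := h4 x y hxy
  rcases h3 x z y y (h1 _ _ _ hz) with h | h
  · exact h
  · exact absurd (h1 _ _ _ h) (h2 _ _ _ (h1 _ _ _ h))

lemma not_self_left (hC : IsCRelation C) (x y : M) : ¬ C x x y :=
  fun h => hC.2.1 _ _ _ h h

lemma not_self_right (hC : IsCRelation C) (x y : M) : ¬ C x y x :=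
  fun h => hC.not_self_left x y (hC.1 _ _ _ h)

/-- Two elements lying with `b` in a common cone off `a` lie with each other in such a cone. -/
lemma left_trans (hC : IsCRelation C) {a x b e : M} (hx : C a x b) (he : C a e b) : C a x e := by
  obtain ⟨h1, h2, h3, -⟩ := hC
  grind

/-- The cones around a point are nested. -/
lemma exists_common_cone (hC : IsCRelation C) {e a b : M} (ha : a ≠ e) (hb : b ≠ e) :
    ∃ c, c ≠ e ∧ ∀ x, C c x e → C a x e ∧ C b x e := by
  obtain ⟨h1, h2, h3, -⟩ := hC
  by_cases h : C a b e
  · exact ⟨b, hb, fun x hx => by grind⟩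
  · exact ⟨a, ha, fun x hx => by grind⟩

end IsCRelation

/-- Some cone around `e`, punctured at `e`, is contained in `s` or disjoint from `s`. -/
def LocallyDecided (C : M → M → M → Prop) (e : M) (s : Set M) : Prop :=
  ∃ a, a ≠ e ∧ ((∀ x, C a x e → x ≠ e → x ∈ s) ∨ (∀ x, C a x e → x ≠ e → x ∉ s))

namespace LocallyDecided

variable {C : M → M → M → Prop} {e : M}

lemma const {d : M} (hd : d ≠ e) (p : Prop) : LocallyDecided C e {_x | p} := by
  by_cases hp : p
  · exact ⟨d, hd, Or.inl fun _ _ _ => hp⟩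
  · exact ⟨d, hd, Or.inr fun _ _ _ => hp⟩

lemma compl {s : Set M} (hs : LocallyDecided C e s) : LocallyDecided C e sᶜ := by
  obtain ⟨a, ha, h | h⟩ := hs
  · exact ⟨a, ha, Or.inr fun x hx hxe hxs => hxs (h x hx hxe)⟩
  · exact ⟨a, ha, Or.inl h⟩

lemma union (hC : IsCRelation C) {s t : Set M} (hs : LocallyDecided C e s)
    (ht : LocallyDecided C e t) : LocallyDecided C e (s ∪ t) := by
  obtain ⟨a, ha, hs⟩ := hs
  obtain ⟨b, hb, ht⟩ := ht
  obtain ⟨c, hc, h⟩ := hC.exists_common_cone ha hb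
  refine ⟨c, hc, ?_⟩
  rcases hs with hs | hs
  · exact Or.inl fun x hx hxe => Or.inl (hs x (h x hx).1 hxe)
  rcases ht with ht | ht
  · exact Or.inl fun x hx hxe => Or.inr (ht x (h x hx).2 hxe)
  · exact Or.inr fun x hx hxe hxs =>
      hxs.elim (hs x (h x hx).1 hxe) (ht x (h x hx).2 hxe)

lemma eq_const (hC : IsCRelation C) {d : M} (hd : d ≠ e) (a : M) :
    LocallyDecided C e {x | x = a} := by
  by_cases ha : a = e
  · exact ⟨d, hd, Or.inr fun x _ hxe hxa => hxe (hxa.trans ha)⟩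
  · refine ⟨a, ha, Or.inr fun x hx _ hxa => ?_⟩
    obtain rfl : x = a := hxa
    exact hC.not_self_left _ _ hx

lemma atom_left_of_ne (hC : IsCRelation C) {a : M} (ha : a ≠ e) (b : M) :
    LocallyDecided C e {x | C x a b} := by
  obtain ⟨h1, h2, h3, -⟩ := hC
  by_cases h : C e a b
  · exact ⟨a, ha, Or.inl fun x hx _ => show C x a b by grind⟩
  · exact ⟨a, ha, Or.inr fun x hx _ (hxa : C x a b) => by grind⟩

lemma atom_left (hC : IsCRelation C) {d : M} (hd : d ≠ e) (a b : M) :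
    LocallyDecided C e {x | C x a b} := by
  by_cases ha : a = e
  · by_cases hb : b = e
    · subst ha
      subst hb
      exact ⟨d, hd, Or.inl fun x _ hxe => hC.of_ne hxe⟩
    · have hswap : {x | C x a b} = {x | C x b a} :=
        Set.ext fun x => ⟨hC.1 _ _ _, hC.1 _ _ _⟩
      rw [hswap]
      exact atom_left_of_ne hC hb a
  · exact atom_left_of_ne hC ha b

lemma atom_middle (hC : IsCRelation C) {d : M} (hd : d ≠ e) (a b : M) :
    LocallyDecided C e {x | C a x b} := by
  by_cases ha : a = e
  · subst ha
    by_cases hb : b = a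
    · subst hb
      exact ⟨d, hd, Or.inr fun x _ _ => hC.not_self_right _ _⟩
    · refine ⟨b, hb, Or.inr fun x hx _ (hxa : C a x b) => ?_⟩
      obtain ⟨h1, h2, h3, -⟩ := hC
      grind
  · refine ⟨a, ha, ?_⟩
    by_cases h : C a e b
    · exact Or.inl fun x hx _ => hC.left_trans hx (hC.1 _ _ _ h)
    · exact Or.inr fun x hx _ hxb =>
        h (hC.left_trans (hC.1 _ _ _ hx) (hC.1 _ _ _ hxb))

lemma atom_right (hC : IsCRelation C) {d : M} (hd : d ≠ e) (a b : M) :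
    LocallyDecided C e {x | C a b x} := by
  have hswap : {x | C a b x} = {x | C a x b} :=
    Set.ext fun x => ⟨hC.1 _ _ _, hC.1 _ _ _⟩
  rw [hswap]
  exact atom_middle hC hd a b

lemma atom_diag (hC : IsCRelation C) {d : M} (hd : d ≠ e) (a : M) :
    LocallyDecided C e {x | C a x x} := by
  have hne : {x | C a x x} = {x | x = a}ᶜ := by
    ext x
    refine ⟨fun h (hx : x = a) => ?_, fun h => hC.of_ne (Ne.symm h)⟩
    subst hx
    exact hC.not_self_left _ _ h
  rw [hne]
  exact (eq_const hC hd a).compl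

end LocallyDecided

/-- In a C-relation, quantifier-free definable sets are locally decided at every point. -/
lemma QFDef.locallyDecided {C : M → M → M → Prop} (hC : IsCRelation C) {e d : M} (hd : d ≠ e)
    {s : Set M} (hs : QFDef C s) : LocallyDecided C e s := by
  induction hs with
  | atomC t₁ t₂ t₃ =>
    cases t₁ <;> cases t₂ <;> cases t₃ <;> simp only [Option.getD_none, Option.getD_some]
    · simpa only [hC.not_self_left] using LocallyDecided.const hd False
    · simpa only [hC.not_self_left] using LocallyDecided.const hd False
    · simpa only [hC.not_self_right] using LocallyDecided.const hd False
    · exact LocallyDecided.atom_left hC hd _ _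
    · exact LocallyDecided.atom_diag hC hd _
    · exact LocallyDecided.atom_middle hC hd _ _
    · exact LocallyDecided.atom_right hC hd _ _
    · exact LocallyDecided.const hd _
  | atomEq t₁ t₂ =>
    cases t₁ <;> cases t₂ <;> simp only [Option.getD_none, Option.getD_some]
    · exact LocallyDecided.const hd _
    · exact LocallyDecided.eq_const hC hd _
    · rename_i a
      convert LocallyDecided.eq_const hC hd a using 3
      exact eq_comm
    · exact LocallyDecided.const hd _
  | compl _ ih => exact ih.compl
  | union _ _ ih₁ ih₂ => exact ih₁.union hC ih₂

lemma definable_interpC_s7 (L : FirstOrder.Language.{u, u}) [L.Structure M] (r : L.Relations 3)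
    {α : Type*} (i j k : α) :
    Set.Definable (univ : Set M) L {t : α → M | interpC L M r (t i) (t j) (t k)} := by
  refine Set.Definable.mono (A := ∅) ?_ (Set.empty_subset _)
  rw [Set.empty_definable_iff]
  refine ⟨r.formula ![Language.Term.var i, Language.Term.var j, Language.Term.var k], ?_⟩
  ext t
  simp only [Set.mem_ofPred_eq, Language.Formula.realize_rel, interpC]
  congr! 1
  ext l
  fin_cases l <;> rfl

/-- The set where definable functions satisfy the C-relation is definable. -/
lemma definable_setOf_interpC {L : FirstOrder.Language.{u, u}} [L.Structure M]
    (r : L.Relations 3) {V : Set M} {f g h : M → M} (hf : DefinableFunOn L M V f)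
    (hg : DefinableFunOn L M V g) (hh : DefinableFunOn L M V h) :
    Set.Definable₁ (univ : Set M) L {x | x ∈ V ∧ interpC L M r (f x) (g x) (h x)} := by
  have hD := (((hf.preimage_comp (![0, 1] : Fin 2 → Fin 4)).inter
    (hg.preimage_comp (![0, 2] : Fin 2 → Fin 4))).inter
    (hh.preimage_comp (![0, 3] : Fin 2 → Fin 4))).inter
    (definable_interpC_s7 (M := M) L r (1 : Fin 4) 2 3)
  have himage := hD.image_comp (![0] : Fin 1 → Fin 4)
  unfold Set.Definable₁
  convert himage using 1
  ext x
  constructor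
  · rintro ⟨hxV, hx⟩
    refine ⟨![x 0, f (x 0), g (x 0), h (x 0)], ⟨⟨⟨⟨hxV, rfl⟩, hxV, rfl⟩, hxV, rfl⟩, hx⟩, ?_⟩
    ext l
    fin_cases l
    rfl
  · rintro ⟨t, ⟨⟨⟨⟨htV, hft⟩, -, hgt⟩, -, hht⟩, ht⟩, rfl⟩
    refine ⟨htV, ?_⟩
    change f (t 0) = t 1 at hft
    change g (t 0) = t 2 at hgt
    change h (t 0) = t 3 at hht
    change interpC L M r (f (t 0)) (g (t 0)) (h (t 0))
    rw [hft, hgt, hht]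
    exact ht

theorem statement7 {L : FirstOrder.Language.{u, u}} {M : Type u} [L.Structure M]
    (r : L.Relations 3)
    (hC : IsCRelation (interpC L M r))
    (hmin : CMinimal L M r)
    (V : Set M) (hV : IsCone (interpC L M r) V) (e : M) (he : e ∈ V)
    (f g h : M → M)
    (hf : DefinableFunOn L M V f) (hg : DefinableFunOn L M V g)
    (hh : DefinableFunOn L M V h) :
    ∃ W : Set M, IsCone (interpC L M r) W ∧ e ∈ W ∧ W ⊆ V ∧
      ((∀ x ∈ W \ {e}, interpC L M r (f x) (g x) (h x)) ∨
        (∀ x ∈ W \ {e}, ¬ interpC L M r (f x) (g x) (h x))) := by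
  obtain ⟨a, b, -, rfl⟩ := hV
  have hab : interpC L M r a e b := he
  have hae : a ≠ e := fun hae => hC.not_self_left e b (hae ▸ hab)
  obtain ⟨d, hd, hdec⟩ := (hmin M inferInstance (rfl : L.completeTheory M = L.completeTheory M) _
    (definable_setOf_interpC r hf hg hh)).locallyDecided hC hae
  obtain ⟨c, hc, hsub⟩ := hC.exists_common_cone hae hd
  have hcV : ∀ x, interpC L M r c x e → interpC L M r a x b := fun x hx =>
    hC.left_trans (hsub x hx).1 (hC.1 _ _ _ hab)
  refine ⟨{x | interpC L M r c x e}, ⟨c, e, hc, rfl⟩, hC.of_ne hc, hcV, ?_⟩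
  rcases hdec with hdec | hdec
  · exact Or.inl fun x hx => (hdec x (hsub x hx.1).2 hx.2).2
  · exact Or.inr fun x hx hxC => hdec x (hsub x hx.1).2 hx.2 ⟨hcV x hx.1, hxC⟩

end CMinPaper
end

section
/- Let M be a C-minimal structure, F = {f_u : u ∈ U} a nice family of functions with domain V and absorbing element e, and g : V → V a definable function with g(e) = e. If Γ_{g,u} is nonempty, then there is v ∈ Γ_{g,u} such that Γ_{g,u} is exactly the cone of v at the node u∧v, i.e., Γ_{g,u} = {z ∈ M : C(u,z,v)}. Moreover, for fixed g, the nonempty sets Γ_{g,u} (u ∈ U) form a chain of cones under inclusion. -/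
open FirstOrder Set

universe u

namespace CMinPaper

variable {M : Type u}

namespace IsCRelation

variable {C : M → M → M → Prop}

theorem symm (h : IsCRelation C) {x y z : M} (hxyz : C x y z) : C x z y :=
  h.1 x y z hxyz

theorem asymm (h : IsCRelation C) {x y z : M} (hxyz : C x y z) : ¬ C y x z :=
  h.2.1 x y z hxyz

theorem split (h : IsCRelation C) {x y z : M} (w : M) (hxyz : C x y z) :
    C x w z ∨ C w y z :=
  h.2.2.1 x y z w hxyz

theorem trans (h : IsCRelation C) {a x y z : M} (hxy : C a x y) (hyz : C a y z) :
    C a x z := by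
  rcases h.split z (h.symm hxy) with hazx | hzyx
  · exact h.symm hazx
  · exact (h.split x hyz).resolve_right fun hxyz => h.asymm (h.symm hxyz) (h.symm hzyx)

/-- A point of a cone is never the only one. -/
theorem exists_ne_of_mem (h : IsCRelation C) {a b e : M} (he : C a e b) :
    ∃ x, x ≠ e ∧ C a x b := by
  have hae : a ≠ e := by
    rintro rfl
    exact h.asymm he he
  obtain ⟨x, hx, hC⟩ := h.2.2.2 a e hae
  exact ⟨x, hx, h.trans (h.symm hC) he⟩

/-- Of two cones `C a · c` and `C b · c` around the same point, one contains the other. -/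
theorem cone_chain (h : IsCRelation C) (a b c : M) :
    (∀ y, C a y c → C b y c) ∨ (∀ y, C b y c → C a y c) := by
  by_cases hab : C a b c
  · exact Or.inr fun y hy => (h.split a hy).resolve_left (h.asymm hab)
  · exact Or.inl fun y hy => (h.split b hy).resolve_left hab

/-- Two cones containing `e` have a common point other than `e`. -/
theorem exists_mem_inter_ne (h : IsCRelation C) {W W' : Set M} {e : M}
    (hW : IsCone C W) (hW' : IsCone C W') (he : e ∈ W) (he' : e ∈ W') :
    ∃ x, x ≠ e ∧ x ∈ W ∧ x ∈ W' := by
  obtain ⟨a, b, -, rfl⟩ := hW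
  obtain ⟨a', b', -, rfl⟩ := hW'
  rcases h.cone_chain a a' e with hsub | hsub
  · obtain ⟨x, hx, hxW⟩ := h.exists_ne_of_mem he
    exact ⟨x, hx, hxW, h.trans (hsub x (h.trans hxW (h.symm he))) he'⟩
  · obtain ⟨x, hx, hxW⟩ := h.exists_ne_of_mem he'
    exact ⟨x, hx, h.trans (hsub x (h.trans hxW (h.symm he'))) he, hxW⟩

/-- The cone of `v` at the node `u ∧ v` lies in every cone containing `u` and `v`. -/
theorem mem_of_isCone (h : IsCRelation C) {U : Set M} (hU : IsCone C U) {u v z : M}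
    (hu : u ∈ U) (hv : v ∈ U) (hz : C u z v) : z ∈ U := by
  obtain ⟨a, b, -, rfl⟩ := hU
  have hauv : C a u v := h.trans hu (h.symm hv)
  exact h.trans ((h.split a hz).resolve_left (h.asymm hauv)) hv

end IsCRelation

namespace NiceFamily

variable {L : FirstOrder.Language.{u, u}} [L.Structure M] {C : M → M → M → Prop}

theorem star_iff (F : NiceFamily L M C) {x : M} (hxV : x ∈ F.V) (hxe : x ≠ F.e) {u v w : M}
    (hu : u ∈ F.U) (hv : v ∈ F.U) (hw : w ∈ F.U) :
    C u v w ↔ C (F.f u x) (F.f v x) (F.f w x) := by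
  obtain ⟨V', -, -, -, hiso⟩ := F.star x ⟨hxV, hxe⟩
  exact hiso u hu v hv w hw

theorem gamma_eq_cone (hC : IsCRelation C) (F : NiceFamily L M C) {g : M → M} {u v : M}
    (hu : u ∈ F.U) (hv : v ∈ F.Gamma g u) : F.Gamma g u = {z | C u z v} := by
  obtain ⟨hvU, W, hW, heW, hWV, hCW⟩ := hv
  ext z
  constructor
  · rintro ⟨hzU, W', hW', heW', -, hCW'⟩
    obtain ⟨x, hxe, hxW, hxW'⟩ := hC.exists_mem_inter_ne hW hW' heW heW'
    exact (F.star_iff (hWV hxW) hxe hu hzU hvU).2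
      (hC.trans (hCW' x ⟨hxW', hxe⟩) (hC.symm (hCW x ⟨hxW, hxe⟩)))
  · intro hz
    have hzU := hC.mem_of_isCone F.coneU hu hvU hz
    exact ⟨hzU, W, hW, heW, hWV, fun x hx =>
      hC.trans ((F.star_iff (hWV hx.1) hx.2 hu hzU hvU).1 hz) (hCW x hx)⟩

/-- An inclusion of cones around `g x`, for one `x` near the absorbing element, gives an
inclusion of the sets `Γ`. -/
theorem gamma_subset_gamma (hC : IsCRelation C) (F : NiceFamily L M C) {g : M → M}
    {u v u' v' x : M} (hu : u ∈ F.U) (hu' : u' ∈ F.U) (hv : v ∈ F.Gamma g u)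
    (hv' : v' ∈ F.Gamma g u') (hxV : x ∈ F.V) (hxe : x ≠ F.e)
    (hx : C (F.f u x) (F.f v x) (g x)) (hx' : C (F.f u' x) (F.f v' x) (g x))
    (hsub : ∀ y, C (F.f u x) y (g x) → C (F.f u' x) y (g x)) :
    F.Gamma g u ⊆ F.Gamma g u' := by
  intro z hz
  have hzU := hz.1
  rw [F.gamma_eq_cone hC hu hv] at hz
  rw [F.gamma_eq_cone hC hu' hv']
  have hzx := hC.trans ((F.star_iff hxV hxe hu hzU hv.1).1 hz) hx
  exact (F.star_iff hxV hxe hu' hzU hv'.1).2 (hC.trans (hsub _ hzx) (hC.symm hx'))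

end NiceFamily

theorem statement10 {L : FirstOrder.Language.{u, u}} {M : Type u}
    [L.Structure M] (r : L.Relations 3)
    (hC : IsCRelation (interpC L M r))
    (hmin : CMinimal L M r)
    (F : NiceFamily L M (interpC L M r))
    (g : M → M) (hg : DefinableFunOn L M F.V g)
    (hgV : Set.MapsTo g F.V F.V) (hge : g F.e = F.e) :
    (∀ u ∈ F.U, (F.Gamma g u).Nonempty →
      ∃ v ∈ F.Gamma g u, F.Gamma g u = {z | interpC L M r u z v}) ∧
    (∀ u ∈ F.U, ∀ u' ∈ F.U, (F.Gamma g u).Nonempty → (F.Gamma g u').Nonempty →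
      F.Gamma g u ⊆ F.Gamma g u' ∨ F.Gamma g u' ⊆ F.Gamma g u) := by
  refine ⟨fun u hu ⟨v, hv⟩ => ⟨v, hv, F.gamma_eq_cone hC hu hv⟩, ?_⟩
  rintro u hu u' hu' ⟨v, hv⟩ ⟨v', hv'⟩
  obtain ⟨-, W, hW, heW, hWV, hCW⟩ := id hv
  obtain ⟨-, W', hW', heW', -, hCW'⟩ := id hv'
  obtain ⟨x, hxe, hxW, hxW'⟩ := hC.exists_mem_inter_ne hW hW' heW heW'
  have hx := hCW x ⟨hxW, hxe⟩
  have hx' := hCW' x ⟨hxW', hxe⟩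
  exact (hC.cone_chain (F.f u x) (F.f u' x) (g x)).imp
    (F.gamma_subset_gamma hC hu hu' hv hv' (hWV hxW) hxe hx hx')
    (F.gamma_subset_gamma hC hu' hu hv' hv (hWV hxW) hxe hx' hx)

end CMinPaper
end
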